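/- arXiv:1904.06650 — 5 statements merged into one kernel-verified Lean document; each statement's English description precedes it below -/
import Mathlib

section
/- Let γ : e → e be a Lie algebra endomorphism with γ(m) = m for all m ∈ a, and let ψ : g → g be the unique linear map with ψ ∘ p = p ∘ γ (which exists since γ(a) ⊆ a, and is a Lie algebra endomorphism of g). Then there exists an F-linear map λ : g → a such that β(ψ x, ψ y) - β(x, y) = ⁅s x, λ y⁆ - ⁅s y, λ x⁆ - λ⁅x, y⁆ for all x, y ∈ g. -/
/-- The 2-cochain associated to a linear section `s` of the projection `e → e/a`:
`β x y = ⁅s x, s y⁆ - s ⁅x, y⁆`. -/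
def lieBeta {F : Type*} [Field F]
    {e : Type*} [LieRing e] [LieAlgebra F e]
    (a : LieIdeal F e) (s : (e ⧸ a) →ₗ[F] e) (x y : e ⧸ a) : e :=
  ⁅s x, s y⁆ - s ⁅x, y⁆

/-!
Both `s ∘ ψ` and `γ ∘ s` lift `ψ` through `p : e → g`, so their difference `l` takes values in the
abelian kernel. Changing a linear lift by a map into the kernel changes its bracket defect by a
coboundary. The defect of `s ∘ ψ` is `β (ψ x) (ψ y)`; the defect of `γ ∘ s` is `γ (β x y) = β x y`,
because `β` is kernel-valued. The coboundary formula for `γ ∘ s` involves the action of `γ (s x)`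
on the kernel, which coincides with the action of `s x` because `γ` fixes the kernel pointwise.
-/

section BracketDefect

variable {R L M N : Type*} [CommRing R] [LieRing L] [LieAlgebra R L] [LieRing M] [LieAlgebra R M]
  [LieRing N] [LieAlgebra R N]

/-- The failure of a linear map `f` between Lie algebras to preserve brackets. For a linear section
of a Lie algebra extension with abelian kernel this is the 2-cocycle of the extension, here with
values in the ambient Lie algebra rather than in the kernel. -/
def bracketDefect (f : L →ₗ[R] M) (x y : L) : M :=
  ⁅f x, f y⁆ - f ⁅x, y⁆

theorem bracketDefect_id (x y : L) : bracketDefect (LinearMap.id : L →ₗ[R] L) x y = 0 :=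
  sub_self _

theorem bracketDefect_comp (f : M →ₗ[R] N) (φ : L →ₗ[R] M)
    (hφ : ∀ x y, φ ⁅x, y⁆ = ⁅φ x, φ y⁆) (x y : L) :
    bracketDefect (f ∘ₗ φ) x y = bracketDefect f (φ x) (φ y) := by
  simp only [bracketDefect, LinearMap.comp_apply, hφ]

theorem bracketDefect_lieHom_comp (φ : M →ₗ⁅R⁆ N) (f : L →ₗ[R] M) (x y : L) :
    bracketDefect ((φ : M →ₗ[R] N) ∘ₗ f) x y = φ (bracketDefect f x y) := by
  simp only [bracketDefect, LinearMap.comp_apply, LieHom.coe_toLinearMap, map_sub, LieHom.map_lie]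

theorem bracketDefect_mem_ker_of_section (p : M →ₗ⁅R⁆ L) (s : L →ₗ[R] M) (hs : ∀ x, p (s x) = x)
    (x y : L) : bracketDefect s x y ∈ p.ker := by
  have hps : (p : M →ₗ[R] L) ∘ₗ s = LinearMap.id := LinearMap.ext hs
  rw [LieHom.mem_ker, ← bracketDefect_lieHom_comp, hps, bracketDefect_id]

theorem bracketDefect_sub_bracketDefect (f g : L →ₗ[R] M) {x y : L}
    (hfg : ⁅(f - g) x, (f - g) y⁆ = 0) :
    bracketDefect f x y - bracketDefect g x y =
      ⁅g x, (f - g) y⁆ - ⁅g y, (f - g) x⁆ - (f - g) ⁅x, y⁆ := by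
  rw [← lie_skew (g y) ((f - g) x), ← sub_eq_zero, ← hfg]
  simp only [bracketDefect, LinearMap.sub_apply, lie_sub, sub_lie]
  abel

end BracketDefect

section Extension

variable {R E L M : Type*} [CommRing R] [LieRing E] [LieAlgebra R E] [LieRing L] [LieAlgebra R L]
  [LieRing M] [LieAlgebra R M]

theorem map_lie_of_comp_eq_lieHom (p : E →ₗ⁅R⁆ L) (hp : Function.Surjective p) (q : E →ₗ⁅R⁆ M)
    (ψ : L → M) (hψ : ∀ u, ψ (p u) = q u) (x y : L) : ψ ⁅x, y⁆ = ⁅ψ x, ψ y⁆ := by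
  obtain ⟨u, rfl⟩ := hp x
  obtain ⟨v, rfl⟩ := hp y
  rw [← LieHom.map_lie, hψ, hψ, hψ, LieHom.map_lie]

theorem lie_apply_left_of_fixes_ideal (I : LieIdeal R E) (γ : E →ₗ⁅R⁆ E) (hγ : ∀ m ∈ I, γ m = m)
    (u : E) {m : E} (hm : m ∈ I) : ⁅γ u, m⁆ = ⁅u, m⁆ :=
  calc
    ⁅γ u, m⁆ = ⁅γ u, γ m⁆ := by rw [hγ m hm]
    _ = γ ⁅u, m⁆ := (γ.map_lie u m).symm
    _ = ⁅u, m⁆ := hγ _ (lie_mem_right R E I u m hm)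

theorem stmt9_general (p : E →ₗ⁅R⁆ L) (hab : ∀ m ∈ p.ker, ∀ n ∈ p.ker, ⁅m, n⁆ = 0)
    (s : L →ₗ[R] E) (hs : ∀ x, p (s x) = x) (γ : E →ₗ⁅R⁆ E) (hγ : ∀ m ∈ p.ker, γ m = m)
    (ψ : L →ₗ[R] L) (hψ : ∀ u, ψ (p u) = p (γ u)) :
    ∃ l : L →ₗ[R] E, (∀ x, l x ∈ p.ker) ∧ ∀ x y,
      bracketDefect s (ψ x) (ψ y) - bracketDefect s x y = ⁅s x, l y⁆ - ⁅s y, l x⁆ - l ⁅x, y⁆ := by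
  let γs : L →ₗ[R] E := (γ : E →ₗ[R] E) ∘ₗ s
  let l : L →ₗ[R] E := s ∘ₗ ψ - γs
  have hl (x : L) : l x ∈ p.ker := by
    change p (s (ψ x) - γ (s x)) = 0
    rw [map_sub, hs, ← hψ, hs, sub_self]
  have hψ_lie : ∀ x y, ψ ⁅x, y⁆ = ⁅ψ x, ψ y⁆ :=
    map_lie_of_comp_eq_lieHom p (fun x ↦ ⟨s x, hs x⟩) (p.comp γ) ψ hψ
  have hγ_defect (x y : L) : bracketDefect γs x y = bracketDefect s x y := by
    rw [bracketDefect_lieHom_comp, hγ _ (bracketDefect_mem_ker_of_section p s hs x y)]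
  refine ⟨l, hl, fun x y ↦ ?_⟩
  calc
    bracketDefect s (ψ x) (ψ y) - bracketDefect s x y
        = bracketDefect (s ∘ₗ ψ) x y - bracketDefect γs x y := by
      rw [bracketDefect_comp s ψ hψ_lie, hγ_defect]
    _ = ⁅γ (s x), l y⁆ - ⁅γ (s y), l x⁆ - l ⁅x, y⁆ :=
      bracketDefect_sub_bracketDefect (s ∘ₗ ψ) γs (hab _ (hl x) _ (hl y))
    _ = ⁅s x, l y⁆ - ⁅s y, l x⁆ - l ⁅x, y⁆ := by
      rw [lie_apply_left_of_fixes_ideal p.ker γ hγ _ (hl y),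
        lie_apply_left_of_fixes_ideal p.ker γ hγ _ (hl x)]

/-- The projection of a Lie algebra onto its quotient by an ideal, as a morphism of Lie algebras;
Mathlib's `LieSubmodule.Quotient.mk'` is only a morphism of Lie modules over `E`. -/
def idealQuotientLieHom (I : LieIdeal R E) : E →ₗ⁅R⁆ E ⧸ I where
  toLinearMap := (LieSubmodule.Quotient.mk' I : E →ₗ[R] E ⧸ I)
  map_lie' := rfl

theorem ker_idealQuotientLieHom (I : LieIdeal R E) : (idealQuotientLieHom I).ker = I :=
  LieSubmodule.ext _ _ fun _ ↦ LieHom.mem_ker.trans (LieSubmodule.Quotient.mk_eq_zero I)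

end Extension

/-- If `γ` is a Lie algebra endomorphism of `e` fixing the abelian ideal `a` pointwise and
`ψ` is the induced (unique) linear map on `g = e/a` with `ψ ∘ p = p ∘ γ`, then
`β (ψ x) (ψ y) - β x y` is a coboundary. -/
theorem stmt9 {F : Type*} [Field F] [CharZero F]
    {e : Type*} [LieRing e] [LieAlgebra F e]
    (a : LieIdeal F e)
    (hab : ∀ m ∈ a, ∀ n ∈ a, ⁅m, n⁆ = (0 : e))
    (s : (e ⧸ a) →ₗ[F] e)
    (hs : ∀ x : e ⧸ a, LieSubmodule.Quotient.mk (N := a) (s x) = x)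
    (γ : e →ₗ⁅F⁆ e)
    (hγ : ∀ m ∈ a, γ m = m)
    (ψ : (e ⧸ a) →ₗ[F] (e ⧸ a))
    (hψ : ∀ x : e, ψ (LieSubmodule.Quotient.mk (N := a) x) =
      LieSubmodule.Quotient.mk (N := a) (γ x)) :
    ∃ l : (e ⧸ a) →ₗ[F] e, (∀ x, l x ∈ a) ∧
      ∀ x y : e ⧸ a,
        lieBeta a s (ψ x) (ψ y) - lieBeta a s x y =
          ⁅s x, l y⁆ - ⁅s y, l x⁆ - l ⁅x, y⁆ := by
  rw [← ker_idealQuotientLieHom a] at hab hγ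
  simpa only [ker_idealQuotientLieHom, lieBeta, bracketDefect] using
    stmt9_general (idealQuotientLieHom a) hab s hs γ hγ ψ hψ
end

section
/- Let ψ : g → g be a Lie algebra endomorphism such that ⁅s(ψ x), m⁆ = ⁅s x, m⁆ for all x ∈ g, m ∈ a, and suppose there exists an F-linear map λ : g → a with β(ψ x, ψ y) - β(x, y) = ⁅s x, λ y⁆ - ⁅s y, λ x⁆ - λ⁅x, y⁆ for all x, y ∈ g. Then there exists a Lie algebra endomorphism γ : e → e with γ(m) = m for all m ∈ a and p ∘ γ = ψ ∘ p. -/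
/-!
Let `p : L → L ⧸ I` be the projection and `s` a section of it, so that every element of `L` is
`s x + m` with `x : L ⧸ I` and `m ∈ I`. The bracket of two such elements is determined by the
bracket of `L ⧸ I`, the action of `s x` on `I` and the curvature `⁅s x, s y⁆ - s ⁅x, y⁆`. Now
`t = s ∘ ψ - l` is a lift of `ψ`. If the values of `l` commute with `I`, then `t x` acts on `I` as
`s x` does, and the curvature of `t` is that of `s`: subtracting `l` changes the curvature of
`s ∘ ψ` by the coboundary of `l`, up to the quadratic term `⁅l x, l y⁆ = 0`. Hence
`s x + m ↦ t x + m` preserves brackets.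
-/

section Curvature

variable {R L M N : Type*} [CommRing R] [LieRing L] [LieAlgebra R L] [LieRing M] [LieAlgebra R M]
  [LieRing N] [LieAlgebra R N]

/-- The curvature of a linear map between Lie algebras, that is, its failure to preserve brackets.
On a section of a quotient map it is the cochain `lieBeta`, here over any commutative ring. -/
def lieCurvature (t : L →ₗ[R] M) (x y : L) : M :=
  ⁅t x, t y⁆ - t ⁅x, y⁆

lemma lieCurvature_comp_lieHom (t : M →ₗ[R] N) (f : L →ₗ⁅R⁆ M) (x y : L) :
    lieCurvature (t ∘ₗ (f : L →ₗ[R] M)) x y = lieCurvature t (f x) (f y) := by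
  simp only [lieCurvature, LinearMap.comp_apply, LieHom.coe_toLinearMap, LieHom.map_lie]

lemma lieCurvature_sub (t l : L →ₗ[R] M) (x y : L) :
    lieCurvature (t - l) x y =
      lieCurvature t x y - (⁅t x, l y⁆ - ⁅t y, l x⁆ - l ⁅x, y⁆) + ⁅l x, l y⁆ := by
  simp only [lieCurvature, LinearMap.sub_apply, sub_lie, lie_sub, ← lie_skew (t y) (l x)]
  abel

lemma add_lie_add_eq_lieCurvature (t : L →ₗ[R] M) (x y : L) (m n : M) :
    ⁅t x + m, t y + n⁆ = t ⁅x, y⁆ + (lieCurvature t x y + ⁅t x, n⁆ - ⁅t y, m⁆ + ⁅m, n⁆) := by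
  simp only [lieCurvature, add_lie, lie_add, ← lie_skew (t y) m]
  abel

end Curvature

lemma lieQuotient_mk_eq_mk_iff_sub_mem {R L : Type*} [CommRing R] [LieRing L] [LieAlgebra R L]
    {I : LieIdeal R L} {z w : L} :
    (LieSubmodule.Quotient.mk z : L ⧸ I) = LieSubmodule.Quotient.mk w ↔ z - w ∈ I :=
  Submodule.Quotient.eq I.toSubmodule

section ChangeSection

variable {R L : Type*} [CommRing R] [LieRing L] [LieAlgebra R L] (I : LieIdeal R L)
  (s t : (L ⧸ I) →ₗ[R] L)

/-- The linear endomorphism `s x + m ↦ t x + m` (`x : L ⧸ I`, `m ∈ I`) of `L` that replaces the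
section `s` of the projection `L → L ⧸ I` by `t`. It is written without the decomposition, so that
it makes sense for arbitrary linear maps `s` and `t`. -/
def changeSection : L →ₗ[R] L :=
  LinearMap.id + (t - s) ∘ₗ (LieSubmodule.Quotient.mk' I : L →ₗ[R] L ⧸ I)

lemma changeSection_apply (z : L) :
    changeSection I s t z =
      t (LieSubmodule.Quotient.mk z) + (z - s (LieSubmodule.Quotient.mk z)) := by
  change z + (t (LieSubmodule.Quotient.mk z) - s (LieSubmodule.Quotient.mk z)) = _
  abel

lemma changeSection_apply_of_mem {m : L} (hm : m ∈ I) : changeSection I s t m = m := by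
  rw [changeSection_apply, LieSubmodule.Quotient.mk_eq_zero'.2 hm, map_zero, map_zero, zero_add,
    sub_zero]

variable {I s t}

lemma sub_section_mk_mem (hs : ∀ x, LieSubmodule.Quotient.mk (N := I) (s x) = x) (z : L) :
    z - s (LieSubmodule.Quotient.mk z) ∈ I :=
  lieQuotient_mk_eq_mk_iff_sub_mem.1 (hs _).symm

lemma exists_eq_section_add (hs : ∀ x, LieSubmodule.Quotient.mk (N := I) (s x) = x) (z : L) :
    ∃ x, ∃ m ∈ I, z = s x + m :=
  ⟨LieSubmodule.Quotient.mk z, _, sub_section_mk_mem hs z, (add_sub_cancel _ _).symm⟩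

lemma lieCurvature_section_mem (hs : ∀ x, LieSubmodule.Quotient.mk (N := I) (s x) = x)
    (x y : L ⧸ I) : lieCurvature s x y ∈ I := by
  refine lieQuotient_mk_eq_mk_iff_sub_mem.1 ?_
  rw [LieSubmodule.Quotient.mk_bracket, hs, hs, hs]

lemma changeSection_section_add (hs : ∀ x, LieSubmodule.Quotient.mk (N := I) (s x) = x)
    (x : L ⧸ I) {m : L} (hm : m ∈ I) : changeSection I s t (s x + m) = t x + m := by
  rw [map_add, changeSection_apply, hs, sub_self, add_zero, changeSection_apply_of_mem I s t hm]

lemma mk_changeSection (hs : ∀ x, LieSubmodule.Quotient.mk (N := I) (s x) = x) (z : L) :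
    LieSubmodule.Quotient.mk (N := I) (changeSection I s t z) =
      LieSubmodule.Quotient.mk (t (LieSubmodule.Quotient.mk z)) := by
  rw [lieQuotient_mk_eq_mk_iff_sub_mem, changeSection_apply, add_sub_cancel_left]
  exact sub_section_mk_mem hs z

lemma changeSection_lie (hs : ∀ x, LieSubmodule.Quotient.mk (N := I) (s x) = x)
    (hact : ∀ x, ∀ m ∈ I, ⁅t x, m⁆ = ⁅s x, m⁆)
    (hcurv : ∀ x y, lieCurvature t x y = lieCurvature s x y) (z w : L) :
    changeSection I s t ⁅z, w⁆ = ⁅changeSection I s t z, changeSection I s t w⁆ := by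
  obtain ⟨x, m, hm, rfl⟩ := exists_eq_section_add hs z
  obtain ⟨y, n, hn, rfl⟩ := exists_eq_section_add hs w
  have hmem : lieCurvature s x y + ⁅s x, n⁆ - ⁅s y, m⁆ + ⁅m, n⁆ ∈ I :=
    add_mem (sub_mem (add_mem (lieCurvature_section_mem hs x y) (I.lie_mem hn)) (I.lie_mem hm))
      (I.lie_mem hn)
  calc changeSection I s t ⁅s x + m, s y + n⁆
      = t ⁅x, y⁆ + (lieCurvature s x y + ⁅s x, n⁆ - ⁅s y, m⁆ + ⁅m, n⁆) := by
        rw [add_lie_add_eq_lieCurvature, changeSection_section_add hs _ hmem]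
    _ = ⁅t x + m, t y + n⁆ := by
        rw [add_lie_add_eq_lieCurvature, hcurv, hact x n hn, hact y m hm]
    _ = ⁅changeSection I s t (s x + m), changeSection I s t (s y + n)⁆ := by
        rw [changeSection_section_add hs x hm, changeSection_section_add hs y hn]

end ChangeSection

theorem stmt10_general {R L : Type*} [CommRing R] [LieRing L] [LieAlgebra R L]
    (I : LieIdeal R L) (s : (L ⧸ I) →ₗ[R] L)
    (hs : ∀ x, LieSubmodule.Quotient.mk (N := I) (s x) = x)
    (ψ : (L ⧸ I) →ₗ⁅R⁆ (L ⧸ I)) (hψ : ∀ x, ∀ m ∈ I, ⁅s (ψ x), m⁆ = ⁅s x, m⁆)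
    (l : (L ⧸ I) →ₗ[R] L) (hl : ∀ x, l x ∈ I) (hcomm : ∀ x, ∀ m ∈ I, ⁅l x, m⁆ = 0)
    (hcob : ∀ x y, lieCurvature s (ψ x) (ψ y) - lieCurvature s x y =
      ⁅s x, l y⁆ - ⁅s y, l x⁆ - l ⁅x, y⁆) :
    ∃ γ : L →ₗ⁅R⁆ L, (∀ m ∈ I, γ m = m) ∧
      ∀ z, LieSubmodule.Quotient.mk (N := I) (γ z) = ψ (LieSubmodule.Quotient.mk z) := by
  let t : (L ⧸ I) →ₗ[R] L := s ∘ₗ (ψ : (L ⧸ I) →ₗ[R] (L ⧸ I)) - l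
  have ht (x) : t x = s (ψ x) - l x := rfl
  have hlift (x) : LieSubmodule.Quotient.mk (N := I) (t x) = ψ x := by
    rw [← hs (ψ x), lieQuotient_mk_eq_mk_iff_sub_mem, ht, sub_sub_cancel_left]
    exact neg_mem (hl x)
  have hact (x) (m) (hm : m ∈ I) : ⁅t x, m⁆ = ⁅s x, m⁆ := by
    rw [ht, sub_lie, hψ x m hm, hcomm x m hm, sub_zero]
  have hcurv (x y) : lieCurvature t x y = lieCurvature s x y := by
    rw [lieCurvature_sub, lieCurvature_comp_lieHom, hcomm x _ (hl y), add_zero]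
    simp only [LinearMap.comp_apply, LieHom.coe_toLinearMap, hψ _ _ (hl _)]
    rw [← hcob, sub_sub_cancel]
  refine ⟨{ changeSection I s t with map_lie' := changeSection_lie hs hact hcurv _ _ }, ?_, ?_⟩
  · exact fun m hm ↦ changeSection_apply_of_mem I s t hm
  · exact fun z ↦ (mk_changeSection hs z).trans (hlift _)

/-- If `ψ` is a Lie algebra endomorphism of `g = e/a` preserving the action of `g` on `a`
and `β (ψ x) (ψ y) - β x y` is a coboundary, then `ψ` lifts to a Lie algebra endomorphism
of `e` fixing `a` pointwise. -/
theorem stmt10 {F : Type*} [Field F] [CharZero F]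
    {e : Type*} [LieRing e] [LieAlgebra F e]
    (a : LieIdeal F e)
    (hab : ∀ m ∈ a, ∀ n ∈ a, ⁅m, n⁆ = (0 : e))
    (s : (e ⧸ a) →ₗ[F] e)
    (hs : ∀ x : e ⧸ a, LieSubmodule.Quotient.mk (N := a) (s x) = x)
    (ψ : (e ⧸ a) →ₗ⁅F⁆ (e ⧸ a))
    (hψ : ∀ (x : e ⧸ a), ∀ m ∈ a, ⁅s (ψ x), m⁆ = ⁅s x, m⁆)
    (l : (e ⧸ a) →ₗ[F] e) (hl : ∀ x, l x ∈ a)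
    (hcob : ∀ x y : e ⧸ a,
      lieBeta a s (ψ x) (ψ y) - lieBeta a s x y = ⁅s x, l y⁆ - ⁅s y, l x⁆ - l ⁅x, y⁆) :
    ∃ γ : e →ₗ⁅F⁆ e, (∀ m ∈ a, γ m = m) ∧
      ∀ x : e, LieSubmodule.Quotient.mk (N := a) (γ x) =
        ψ (LieSubmodule.Quotient.mk (N := a) x) := by
  exact stmt10_general a s hs ψ hψ l hl (fun x ↦ hab (l x) (hl x)) hcob
end

section
/- Suppose the section s is a Lie algebra homomorphism. Then for every e-equivariant endomorphism φ of a there exists a Lie algebra endomorphism f : e → e with f(x) - x ∈ a for all x ∈ e and f(m) = φ(m) for all m ∈ a. -/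
/-!
For an abelian ideal `a`, the Lie endomorphisms of `L` congruent to the identity modulo `a` are
exactly the maps `id + D` with `D : L → a` a derivation, because the quadratic term `⁅D x, D y⁆` in
`⁅x + D x, y + D y⁆` vanishes. A Lie algebra section `s` of `p : L → L ⧸ a` makes `s ∘ p` such an
endomorphism, so `D = s ∘ p - id` is a derivation, and `D = -id` on `a`. Derivations may be composed
with module homomorphisms, so `f = id + (id - φ) ∘ D` is again a Lie endomorphism, and on `a` it is
`id - (id - φ) = φ`.
-/

section Postcomp

variable {R L M N : Type*} [CommRing R] [LieRing L] [LieAlgebra R L]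
  [AddCommGroup M] [Module R M] [LieRingModule L M] [LieModule R L M]
  [AddCommGroup N] [Module R N] [LieRingModule L N] [LieModule R L N]

/-- The composition `ψ ∘ D` of a Lie derivation with a homomorphism of Lie modules, as a Lie
derivation. -/
def lieDerivationPostcomp (ψ : M →ₗ⁅R,L⁆ N) (D : LieDerivation R L M) : LieDerivation R L N where
  toLinearMap := (ψ : M →ₗ[R] N) ∘ₗ (D : L →ₗ[R] M)
  leibniz' x y := by simp

@[simp]
lemma lieDerivationPostcomp_apply (ψ : M →ₗ⁅R,L⁆ N) (D : LieDerivation R L M) (x : L) :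
    lieDerivationPostcomp ψ D x = ψ (D x) :=
  rfl

end Postcomp

section LieIdeal

variable {R L : Type*} [CommRing R] [LieRing L] [LieAlgebra R L] {a : LieIdeal R L}

lemma lie_eq_zero_of_mem_of_isLieAbelian [IsLieAbelian a] {m n : L} (hm : m ∈ a) (hn : n ∈ a) :
    ⁅m, n⁆ = 0 :=
  congrArg Subtype.val (trivial_lie_zero a a ⟨m, hm⟩ ⟨n, hn⟩)

/-- The Lie algebra endomorphism `id + D` attached to a derivation `D` with values in an abelian
ideal. -/
def idAddLieDerivation [IsLieAbelian a] (D : LieDerivation R L a) : L →ₗ⁅R⁆ L where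
  toLinearMap := LinearMap.id + (a : Submodule R L).subtype ∘ₗ (D : L →ₗ[R] a)
  map_lie' {x y} := by
    change ⁅x, y⁆ + (D ⁅x, y⁆ : L) = ⁅x + (D x : L), y + (D y : L)⁆
    have quadratic_term : ⁅(D x : L), (D y : L)⁆ = 0 :=
      lie_eq_zero_of_mem_of_isLieAbelian (D x).2 (D y).2
    rw [D.apply_lie_eq_sub, LieSubmodule.coe_sub, LieSubmodule.coe_bracket,
      LieSubmodule.coe_bracket, add_lie, lie_add, lie_add, quadratic_term,
      ← lie_skew (D x : L) y]
    abel

@[simp]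
lemma idAddLieDerivation_apply [IsLieAbelian a] (D : LieDerivation R L a) (x : L) :
    idAddLieDerivation D x = x + D x :=
  rfl

/-- The derivation `f - id` with values in an abelian ideal `a` attached to a Lie algebra
endomorphism `f` that is congruent to the identity modulo `a`. -/
def lieDerivationSubId [IsLieAbelian a] (f : L →ₗ⁅R⁆ L) (hf : ∀ x, f x - x ∈ a) :
    LieDerivation R L a where
  toLinearMap := ((f : L →ₗ[R] L) - LinearMap.id).codRestrict (a : Submodule R L) hf
  leibniz' x y := by
    apply Subtype.ext
    change f ⁅x, y⁆ - ⁅x, y⁆ = ⁅x, f y - y⁆ - ⁅y, f x - x⁆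
    have quadratic_term : ⁅f x - x, f y - y⁆ = 0 :=
      lie_eq_zero_of_mem_of_isLieAbelian (hf x) (hf y)
    calc f ⁅x, y⁆ - ⁅x, y⁆
        = ⁅x, f y - y⁆ + ⁅f x - x, y⁆ + ⁅f x - x, f y - y⁆ := by
          simp only [LieHom.map_lie, lie_sub, sub_lie]
          abel
      _ = ⁅x, f y - y⁆ - ⁅y, f x - x⁆ := by
          rw [quadratic_term, add_zero, ← lie_skew y, sub_neg_eq_add]

@[simp]
lemma coe_lieDerivationSubId_apply [IsLieAbelian a] (f : L →ₗ⁅R⁆ L) (hf : ∀ x, f x - x ∈ a)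
    (x : L) : (lieDerivationSubId f hf x : L) = f x - x :=
  rfl

variable (a) in
/-- The canonical projection `L → L ⧸ a` as a homomorphism of Lie algebras;
`LieSubmodule.Quotient.mk'` is the same map as a homomorphism of `L`-modules. -/
def lieIdealQuotientMk : L →ₗ⁅R⁆ L ⧸ a where
  toLinearMap := (LieSubmodule.Quotient.mk' a : L →ₗ[R] L ⧸ a)
  map_lie' := rfl

lemma lieIdealQuotientMk_eq_zero {x : L} : lieIdealQuotientMk a x = 0 ↔ x ∈ a :=
  LieSubmodule.Quotient.mk_eq_zero a

lemma comp_lieIdealQuotientMk_sub_mem {s : L ⧸ a →ₗ⁅R⁆ L}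
    (hs : ∀ x, LieSubmodule.Quotient.mk (N := a) (s x) = x) (x : L) :
    s.comp (lieIdealQuotientMk a) x - x ∈ a := by
  rw [← lieIdealQuotientMk_eq_zero, map_sub, sub_eq_zero]
  exact hs (lieIdealQuotientMk a x)

lemma comp_lieIdealQuotientMk_eq_zero (s : L ⧸ a →ₗ⁅R⁆ L) (m : a) :
    s.comp (lieIdealQuotientMk a) m = 0 := by
  rw [LieHom.comp_apply, lieIdealQuotientMk_eq_zero.2 m.2, map_zero]

end LieIdeal

theorem stmt14_general {R L : Type*} [CommRing R] [LieRing L] [LieAlgebra R L]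
    (a : LieIdeal R L) [IsLieAbelian a] (s : L ⧸ a →ₗ⁅R⁆ L)
    (hs : ∀ x, LieSubmodule.Quotient.mk (N := a) (s x) = x) (φ : a →ₗ⁅R,L⁆ a) :
    ∃ f : L →ₗ⁅R⁆ L, (∀ x, f x - x ∈ a) ∧ ∀ m : a, f m = (φ m : L) := by
  let D : LieDerivation R L a :=
    lieDerivationSubId (s.comp (lieIdealQuotientMk a)) (comp_lieIdealQuotientMk_sub_mem hs)
  have D_coe (m : a) : D m = -m := Subtype.ext <| by
    rw [coe_lieDerivationSubId_apply, comp_lieIdealQuotientMk_eq_zero, zero_sub,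
      LieSubmodule.coe_neg]
  refine ⟨idAddLieDerivation (lieDerivationPostcomp (LieModuleHom.id - φ) D),
    fun x => ?_, fun m => ?_⟩
  · rw [idAddLieDerivation_apply, add_sub_cancel_left]
    exact SetLike.coe_mem _
  · rw [idAddLieDerivation_apply, lieDerivationPostcomp_apply, D_coe]
    simp

/-- If the linear section `s` of `p : e → e/a` is a Lie algebra homomorphism, then every
`e`-equivariant endomorphism `φ` of the abelian ideal `a` extends to a Lie algebra
endomorphism `f` of `e` with `f x - x ∈ a` for all `x` and `f m = φ m` on `a`. -/
theorem stmt14 {F : Type*} [Field F] [CharZero F]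
    {e : Type*} [LieRing e] [LieAlgebra F e]
    (a : LieIdeal F e)
    (hab : ∀ m ∈ a, ∀ n ∈ a, ⁅m, n⁆ = (0 : e))
    (s : (e ⧸ a) →ₗ[F] e)
    (hs : ∀ x : e ⧸ a, LieSubmodule.Quotient.mk (N := a) (s x) = x)
    (hsh : ∀ x y : e ⧸ a, s ⁅x, y⁆ = ⁅s x, s y⁆)
    (φ : a →ₗ[F] a)
    (hφ : ∀ (x : e) (m : a), φ ⁅x, m⁆ = ⁅x, φ m⁆) :
    ∃ f : e →ₗ⁅F⁆ e, (∀ x, f x - x ∈ a) ∧ ∀ m : a, f m = (φ m : e) := by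
  have : IsLieAbelian a := ⟨fun m n => Subtype.ext (hab m m.2 n n.2)⟩
  exact stmt14_general a { s with map_lie' := hsh _ _ } hs { φ with map_lie' := hφ _ _ }
end

section
/- Suppose the section s is a Lie algebra homomorphism. Then every Lie algebra endomorphism ψ : g → g satisfying ⁅s(ψ x), m⁆ = ⁅s x, m⁆ for all x ∈ g, m ∈ a lifts to e: there exists a Lie algebra endomorphism γ : e → e with γ(m) = m for all m ∈ a and p ∘ γ = ψ ∘ p. -/
/-!
The section splits `L` as a semidirect product of `ker p` by `M`: each `x` is `k + s (p x)` with
`k ∈ ker p`. A Lie homomorphism out of such a product amounts to a pair of Lie homomorphisms `f` on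
`ker p` and `g` on `M` that intertwine the action of `M` on `ker p`. The lift of `ψ` is the one
with `f` the inclusion and `g = s ∘ ψ`, for which intertwining says exactly that `ψ` preserves the
action.
-/

section SplitExtension

open Function

variable {R L M L' : Type*} [CommRing R] [LieRing L] [LieAlgebra R L] [LieRing M] [LieAlgebra R M]
  [LieRing L'] [LieAlgebra R L'] {p : L →ₗ⁅R⁆ M} {s : M →ₗ⁅R⁆ L}

/-- The projection of a split extension `L` of `M` onto the kernel of `p : L → M` along the range
of the section `s`. It is a linear map, in general not a Lie homomorphism. -/
def kerProjection (hps : LeftInverse p s) : L →ₗ[R] p.ker :=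
  (LinearMap.id - (s : M →ₗ[R] L) ∘ₗ (p : L →ₗ[R] M)).codRestrict p.ker.toSubmodule fun x ↦ by
    simp [hps (p x)]

@[simp]
lemma coe_kerProjection (hps : LeftInverse p s) (x : L) :
    (kerProjection hps x : L) = x - s (p x) := rfl

lemma kerProjection_coe (hps : LeftInverse p s) (m : p.ker) : kerProjection hps m = m := by
  ext
  simp [LieHom.mem_ker.mp m.2]

lemma kerProjection_lie (hps : LeftInverse p s) (x y : L) :
    kerProjection hps ⁅x, y⁆ = ⁅kerProjection hps x, kerProjection hps y⁆ +
      ⁅s (p x), kerProjection hps y⁆ - ⁅s (p y), kerProjection hps x⁆ := by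
  ext
  simp only [coe_kerProjection, LieHom.map_lie, LieSubmodule.coe_bracket, LieSubmodule.coe_add,
    LieSubmodule.coe_sub, LieIdeal.coe_bracket_of_module, sub_lie, lie_sub]
  rw [← lie_skew x (s (p y)), ← lie_skew (s (p x)) (s (p y))]
  abel

/-- The Lie homomorphism out of a split extension that is `f` on the kernel of `p` and `g` on the
complement given by the section `s` (the universal property of a semidirect product). -/
def liftOfSection (hps : LeftInverse p s) (f : p.ker →ₗ⁅R⁆ L') (g : M →ₗ⁅R⁆ L')
    (hfg : ∀ (u : M) (m : p.ker), f ⁅s u, m⁆ = ⁅g u, f m⁆) : L →ₗ⁅R⁆ L' where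
  toLinearMap := (f : p.ker →ₗ[R] L') ∘ₗ kerProjection hps + (g : M →ₗ[R] L') ∘ₗ (p : L →ₗ[R] M)
  map_lie' {x y} := by
    change f (kerProjection hps ⁅x, y⁆) + g (p ⁅x, y⁆) =
      ⁅f (kerProjection hps x) + g (p x), f (kerProjection hps y) + g (p y)⁆
    rw [kerProjection_lie, map_sub, map_add, hfg, hfg, f.map_lie, p.map_lie, g.map_lie,
      ← lie_skew (g (p y)), add_lie, lie_add, lie_add]
    abel

lemma liftOfSection_apply (hps : LeftInverse p s) (f : p.ker →ₗ⁅R⁆ L') (g : M →ₗ⁅R⁆ L')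
    (hfg : ∀ (u : M) (m : p.ker), f ⁅s u, m⁆ = ⁅g u, f m⁆) (x : L) :
    liftOfSection hps f g hfg x = f (kerProjection hps x) + g (p x) := rfl

lemma liftOfSection_coe (hps : LeftInverse p s) (f : p.ker →ₗ⁅R⁆ L') (g : M →ₗ⁅R⁆ L')
    (hfg : ∀ (u : M) (m : p.ker), f ⁅s u, m⁆ = ⁅g u, f m⁆) (m : p.ker) :
    liftOfSection hps f g hfg m = f m := by
  rw [liftOfSection_apply, kerProjection_coe, LieHom.mem_ker.mp m.2, map_zero, add_zero]

theorem stmt15_general (hps : LeftInverse p s) (ψ : M →ₗ⁅R⁆ M)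
    (hψ : ∀ u : M, ∀ m ∈ p.ker, ⁅s (ψ u), m⁆ = ⁅s u, m⁆) :
    ∃ γ : L →ₗ⁅R⁆ L, (∀ m ∈ p.ker, γ m = m) ∧ ∀ x : L, p (γ x) = ψ (p x) := by
  have hcompat (u : M) (m : p.ker) : p.ker.incl ⁅s u, m⁆ = ⁅s.comp ψ u, p.ker.incl m⁆ :=
    (hψ u m m.2).symm
  refine ⟨liftOfSection hps p.ker.incl (s.comp ψ) hcompat, fun m hm ↦ ?_, fun x ↦ ?_⟩
  · exact liftOfSection_coe hps _ _ hcompat ⟨m, hm⟩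
  · have hker : p (kerProjection hps x) = 0 := LieHom.mem_ker.mp (kerProjection hps x).2
    rw [liftOfSection_apply, map_add, LieIdeal.incl_apply, hker, zero_add, LieHom.comp_apply, hps]

end SplitExtension

section Quotient

variable {R L : Type*} [CommRing R] [LieRing L] [LieAlgebra R L] (a : LieIdeal R L)

/-- The canonical projection `L → L/a` as a homomorphism of Lie algebras
(`LieSubmodule.Quotient.mk'` is the same map as a homomorphism of `L`-modules). -/
def quotientLieHom : L →ₗ⁅R⁆ L ⧸ a where
  toLinearMap := (LieSubmodule.Quotient.mk' a : L →ₗ[R] L ⧸ a)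
  map_lie' {x y} := LieSubmodule.Quotient.mk_bracket a x y

lemma ker_quotientLieHom : (quotientLieHom a).ker = a := by
  ext x
  exact LieHom.mem_ker.trans LieSubmodule.Quotient.mk_eq_zero'

end Quotient

/-- If the linear section `s` of `p : e → e/a` is a Lie algebra homomorphism, then every
Lie algebra endomorphism `ψ` of `g = e/a` preserving the action of `g` on the abelian
ideal `a` lifts to a Lie algebra endomorphism `γ` of `e` fixing `a` pointwise with
`p ∘ γ = ψ ∘ p`. -/
theorem stmt15 {F : Type*} [Field F] [CharZero F]
    {e : Type*} [LieRing e] [LieAlgebra F e]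
    (a : LieIdeal F e)
    (hab : ∀ m ∈ a, ∀ n ∈ a, ⁅m, n⁆ = (0 : e))
    (s : (e ⧸ a) →ₗ[F] e)
    (hs : ∀ x : e ⧸ a, LieSubmodule.Quotient.mk (N := a) (s x) = x)
    (hsh : ∀ x y : e ⧸ a, s ⁅x, y⁆ = ⁅s x, s y⁆)
    (ψ : (e ⧸ a) →ₗ⁅F⁆ (e ⧸ a))
    (hψ : ∀ (x : e ⧸ a), ∀ m ∈ a, ⁅s (ψ x), m⁆ = ⁅s x, m⁆) :
    ∃ γ : e →ₗ⁅F⁆ e, (∀ m ∈ a, γ m = m) ∧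
      ∀ x : e, LieSubmodule.Quotient.mk (N := a) (γ x) =
        ψ (LieSubmodule.Quotient.mk (N := a) x) := by
  have lift := stmt15_general (p := quotientLieHom a) (s := { s with map_lie' := hsh _ _ }) hs ψ
  exact (ker_quotientLieHom a ▸ lift) hψ
end

section
/- Let φ : a → a be an e-equivariant linear automorphism of a, and suppose there exists an F-linear map λ : g → a with φ(β(x, y)) - β(x, y) = ⁅s x, λ y⁆ - ⁅s y, λ x⁆ - λ⁅x, y⁆ for all x, y ∈ g. Then there exists a Lie algebra automorphism f of e with f(x) - x ∈ a for all x ∈ e and f(m) = φ(m) for all m ∈ a. -/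
/-!
Let `p : e → e ⧸ a` be the projection. Write `φ = id + ψ` and look for `f = id + D` with
`D : e → a`. As `a` is abelian, `f` is a Lie algebra homomorphism exactly when `D` is a derivation,
so it suffices to extend the equivariant map `ψ` from `a` to a derivation on `e`. Now
`x ↦ l (p x) + ψ (x - s (p x))` extends `ψ`, and the Leibniz rule for it reduces to the equation
`ψ (β x y) = ⁅s x, l y⁆ - ⁅s y, l x⁆ - l ⁅x, y⁆`. With `i : a → e` the inclusion, `f = id + i ∘ D`
and `φ = id + D ∘ i`, so each is bijective if and only if the other is.
-/

theorem bijective_add_comp_swap {G H : Type*} [AddGroup G] [AddGroup H] {f : G →+ H} {g : H →+ G}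
    (h : Function.Bijective fun y ↦ y + f (g y)) : Function.Bijective fun x ↦ x + g (f x) := by
  constructor
  · intro x x' hx
    have hf : f x = f x' := h.injective (by simpa only [map_add] using congrArg f hx)
    simpa only [hf, add_left_inj] using hx
  · intro z
    obtain ⟨y, hy : y + f (g y) = f z⟩ := h.surjective (f z)
    have hf : f (z - g y) = y := by rw [map_sub, ← hy, add_sub_cancel_right]
    exact ⟨z - g y, by simp only [hf, sub_add_cancel]⟩

theorem bijective_add_comp_iff {G H : Type*} [AddGroup G] [AddGroup H] {f : G →+ H} {g : H →+ G} :
    (Function.Bijective fun x ↦ x + g (f x)) ↔ Function.Bijective fun y ↦ y + f (g y) :=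
  ⟨bijective_add_comp_swap, bijective_add_comp_swap⟩

section

variable {R e : Type*} [CommRing R] [LieRing e] [LieAlgebra R e] {a : LieIdeal R e}

section Derivation

variable [IsLieAbelian a]

/-- The Lie algebra endomorphism `id + D` of `e` attached to a derivation `D` of `e` with values
in an abelian ideal. -/
def idAddDerivation (D : LieDerivation R e a) : e →ₗ⁅R⁆ e where
  toLinearMap := LinearMap.id + a.toSubmodule.subtype ∘ₗ D.toLinearMap
  map_lie' {x y} := by
    have habelian : ⁅(D x : e), (D y : e)⁆ = 0 :=
      congrArg Subtype.val (trivial_lie_zero a a (D x) (D y))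
    change ⁅x, y⁆ + (D ⁅x, y⁆ : e) = ⁅x + D x, y + D y⁆
    rw [D.apply_lie_eq_sub, add_lie, lie_add, lie_add, habelian, ← lie_skew (D x : e) y,
      LieSubmodule.coe_sub, LieSubmodule.coe_bracket, LieSubmodule.coe_bracket]
    abel

theorem idAddDerivation_apply (D : LieDerivation R e a) (x : e) :
    idAddDerivation D x = x + D x :=
  rfl

theorem idAddDerivation_bijective_iff (D : LieDerivation R e a) :
    Function.Bijective (idAddDerivation D) ↔ Function.Bijective fun m : a ↦ m + D m :=
  bijective_add_comp_iff (f := D.toLinearMap.toAddMonoidHom)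
    (g := a.toSubmodule.subtype.toAddMonoidHom)

end Derivation

section LinearSection

open LieSubmodule.Quotient

variable {s : (e ⧸ a) →ₗ[R] e} (hs : Function.LeftInverse (mk (N := a)) s)

/-- The cochain `β x y = ⁅s x, s y⁆ - s ⁅x, y⁆` measuring the failure of a linear section `s` to
be a Lie algebra homomorphism, with values in the ideal `a`. -/
def sectionCochain (x y : e ⧸ a) : a :=
  ⟨⁅s x, s y⁆ - s ⁅x, y⁆,
    (Submodule.Quotient.eq a.toSubmodule).1 <|
      show mk (N := a) ⁅s x, s y⁆ = mk (s ⁅x, y⁆) by rw [mk_bracket, hs, hs, hs]⟩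

include hs in
theorem sub_section_mk_mem_s19 (x : e) : x - s (mk (N := a) x) ∈ a :=
  (Submodule.Quotient.eq a.toSubmodule).1 (hs _).symm

/-- The projection `x ↦ x - s (p x)` of `e` onto `a` along the image of a linear section `s` of
`p : e → e ⧸ a`. -/
def sectionRetraction : e →ₗ[R] a :=
  (LinearMap.id - s ∘ₗ a.toSubmodule.mkQ).codRestrict a.toSubmodule (sub_section_mk_mem_s19 hs)

theorem coe_sectionRetraction (x : e) : (sectionRetraction hs x : e) = x - s (mk x) :=
  rfl

theorem sectionRetraction_coe (m : a) : sectionRetraction hs (m : e) = m := by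
  ext
  rw [coe_sectionRetraction, mk_eq_zero'.2 m.2, map_zero, sub_zero]

theorem sectionRetraction_lie (x y : e) :
    sectionRetraction hs ⁅x, y⁆ =
      sectionCochain hs (mk x) (mk y) + ⁅x, sectionRetraction hs y⁆ -
        ⁅s (mk y), sectionRetraction hs x⁆ := by
  ext
  simp only [sectionCochain, coe_sectionRetraction, mk_bracket, LieSubmodule.coe_sub,
    LieSubmodule.coe_add, LieSubmodule.coe_bracket, lie_sub]
  rw [← lie_skew x (s (mk y)), ← lie_skew (s (mk x)) (s (mk y))]
  abel

variable {M : Type*} [AddCommGroup M] [Module R M] [LieRingModule e M] [LieModule R e M]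

include hs in
theorem section_mk_lie (hM : a ≤ LieModule.ker R e M) (x : e) (v : M) :
    ⁅s (mk x), v⁆ = ⁅x, v⁆ := by
  rw [eq_comm, ← sub_eq_zero, ← sub_lie]
  exact (LieModule.mem_ker R e M _).1 (hM (sub_section_mk_mem_s19 hs x)) v

theorem exists_lieDerivation_extending (hM : a ≤ LieModule.ker R e M) (ψ : a →ₗ⁅R,e⁆ M)
    (l : (e ⧸ a) →ₗ[R] M)
    (hl : ∀ x y, ψ (sectionCochain hs x y) = ⁅s x, l y⁆ - ⁅s y, l x⁆ - l ⁅x, y⁆) :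
    ∃ D : LieDerivation R e M, ∀ m : a, D m = ψ m := by
  let D₀ : e →ₗ[R] M := l ∘ₗ a.toSubmodule.mkQ + (ψ : a →ₗ[R] M) ∘ₗ sectionRetraction hs
  have hD₀ (x : e) : D₀ x = l (mk x) + ψ (sectionRetraction hs x) := rfl
  refine ⟨⟨D₀, fun x y ↦ ?_⟩, fun m ↦ ?_⟩
  · rw [hD₀, sectionRetraction_lie, map_sub, map_add, hl, LieModuleHom.map_lie,
      LieModuleHom.map_lie, mk_bracket]
    simp only [section_mk_lie hs hM, hD₀, lie_add]
    abel
  · change D₀ m = ψ m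
    rw [hD₀, sectionRetraction_coe, mk_eq_zero'.2 m.2, map_zero, zero_add]

end LinearSection

end

theorem stmt19_general {R e : Type*} [CommRing R] [LieRing e] [LieAlgebra R e]
    (a : LieIdeal R e) [IsLieAbelian a] (s : (e ⧸ a) →ₗ[R] e)
    (hs : Function.LeftInverse (LieSubmodule.Quotient.mk (N := a)) s)
    (φ : a →ₗ⁅R,e⁆ a) (l : (e ⧸ a) →ₗ[R] a)
    (hl : ∀ x y, φ (sectionCochain hs x y) - sectionCochain hs x y =
      ⁅s x, l y⁆ - ⁅s y, l x⁆ - l ⁅x, y⁆) :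
    ∃ f : e →ₗ⁅R⁆ e, (Function.Bijective f ↔ Function.Bijective φ) ∧ (∀ x, f x - x ∈ a) ∧
      ∀ m : a, f m = (φ m : e) := by
  obtain ⟨D, hD⟩ := exists_lieDerivation_extending hs
    ((LieIdeal.isLieAbelian_iff R e).1 inferInstance) (φ - LieModuleHom.id) l hl
  have hφ (m : a) : m + D m = φ m := by
    rw [hD, LieModuleHom.sub_apply, LieModuleHom.id_apply, add_sub_cancel]
  refine ⟨idAddDerivation D, ?_, fun x ↦ ?_, fun m ↦ ?_⟩
  · simp only [idAddDerivation_bijective_iff, hφ]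
  · rw [idAddDerivation_apply, add_sub_cancel_left]
    exact (D x).2
  · rw [idAddDerivation_apply, ← hφ, LieSubmodule.coe_add]

/-- If `φ` is an `e`-equivariant automorphism of the abelian ideal `a` such that
`φ ∘ β - β` is a coboundary, then `φ` extends to a Lie algebra automorphism `f` of `e`
with `f x - x ∈ a` for all `x` and `f m = φ m` on `a`. -/
theorem stmt19 {F : Type*} [Field F] [CharZero F]
    {e : Type*} [LieRing e] [LieAlgebra F e]
    (a : LieIdeal F e)
    (hab : ∀ m ∈ a, ∀ n ∈ a, ⁅m, n⁆ = (0 : e))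
    (s : (e ⧸ a) →ₗ[F] e)
    (hs : ∀ x : e ⧸ a, LieSubmodule.Quotient.mk (N := a) (s x) = x)
    (φ : a →ₗ[F] a)
    (hφ : ∀ (x : e) (m : a), φ ⁅x, m⁆ = ⁅x, φ m⁆)
    (hbij : Function.Bijective φ)
    (hcob : ∃ l : (e ⧸ a) →ₗ[F] e, (∀ x, l x ∈ a) ∧
      ∀ (x y : e ⧸ a) (hxy : lieBeta a s x y ∈ a),
        (φ ⟨lieBeta a s x y, hxy⟩ : e) - lieBeta a s x y =
          ⁅s x, l y⁆ - ⁅s y, l x⁆ - l ⁅x, y⁆) :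
    ∃ f : e →ₗ⁅F⁆ e, Function.Bijective f ∧ (∀ x, f x - x ∈ a) ∧
      ∀ m : a, f m = (φ m : e) := by
  obtain ⟨l, hl, h⟩ := hcob
  have : IsLieAbelian a := ⟨fun m n ↦ Subtype.ext (hab m m.2 n n.2)⟩
  exact (stmt19_general a s hs ⟨φ, hφ _ _⟩ (l.codRestrict a.toSubmodule hl)
    fun x y ↦ Subtype.ext (h x y _)).imp fun _ ↦ And.imp_left fun hf ↦ hf.2 hbij
end
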